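/- The set of singular points of the octic surface G₈ = 0 in ℙ³(ℂ) equals the set of points represented by z ∈ ℂ⁴∖{0} for which the vector (z₀⁴, z₁⁴, z₂⁴, z₃⁴) is a nonzero scalar multiple of one of the four vectors (0, 1, 1, 8), (1, 0, 1, 8), (1, 1, 0, −49), (8, 8, −49, 0); this set has exactly 64 elements. -/

import Mathlib

open MvPolynomial

/-- The quartic form `A₄ = (8/9)z₀⁴ + (8/9)z₁⁴ − (64/63)z₂⁴ + (1/63)z₃⁴`. -/
noncomputable def labsA4 : MvPolynomial (Fin 4) ℂ :=
  C (8/9 : ℂ) * X 0 ^ 4 + C (8/9 : ℂ) * X 1 ^ 4 - C (64/63 : ℂ) * X 2 ^ 4 + C (1/63 : ℂ) * X 3 ^ 4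

/-- The quartic form `B₄ = (1/9)z₀⁴ + (1/9)z₁⁴ + (1/63)z₂⁴ − (1/63)z₃⁴`. -/
noncomputable def labsB4 : MvPolynomial (Fin 4) ℂ :=
  C (1/9 : ℂ) * X 0 ^ 4 + C (1/9 : ℂ) * X 1 ^ 4 + C (1/63 : ℂ) * X 2 ^ 4 - C (1/63 : ℂ) * X 3 ^ 4

/-- The octic `G₈ = (z₀z₁)⁴ − A₄·B₄` of Labs, with `64` A₃-points. -/
noncomputable def labsG8 : MvPolynomial (Fin 4) ℂ := (X 0 * X 1) ^ 4 - labsA4 * labsB4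

/-!
The octic `G₈` is the pull-back of a smooth quadric under `z ↦ (zᵢ⁴)ᵢ`, so by the chain rule it is
singular at `z` iff, at `y = (zᵢ⁴)ᵢ`, each coordinate `yᵢ` or the partial derivative in that
direction vanishes. Write the gradient of the quadric as `w = N⁻¹ y`, with `N` the symmetric matrix
of the dual quadric; the condition reads `wᵢ (N w)ᵢ = 0` for all `i`. The diagonal of `N` vanishes
(the coordinate planes are tangent to the quadric) and all its larger principal minors do not, which
forces `w` to be supported at one index: `y` is a multiple of a column of `N`, i.e. one of the four
points of tangency. Each of these has three nonzero coordinates, hence `4 ^ (3 - 1)` preimages.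
-/

open Matrix Projectivization

section PowerSubstitution

variable {σ R : Type*} [CommSemiring R]

theorem pderiv_expand (n : ℕ) (i : σ) (p : MvPolynomial σ R) :
    pderiv i (expand n p) =
      (n : MvPolynomial σ R) * X i ^ (n - 1) * expand n (pderiv i p) := by
  classical
  induction p using MvPolynomial.induction_on with
  | C a => simp
  | add p q hp hq => simp only [map_add, hp, hq, mul_add]
  | mul_X p j hp =>
    rcases eq_or_ne j i with rfl | hij
    · simp only [map_mul, expand_X, Derivation.leibniz, hp, Derivation.leibniz_pow, pderiv_X_self,
        smul_eq_mul, nsmul_eq_mul, map_add, mul_one]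
      ring
    · simp only [map_mul, expand_X, Derivation.leibniz, hp, Derivation.leibniz_pow,
        pderiv_X_of_ne hij, smul_eq_mul, mul_zero, smul_zero, zero_add]
      ring

theorem eval_pderiv_expand_eq_zero_iff [NoZeroDivisors R] {n : ℕ} (hn : 2 ≤ n) (hnR : (n : R) ≠ 0)
    (i : σ) (p : MvPolynomial σ R) (z : σ → R) :
    eval z (pderiv i (expand n p)) = 0 ↔ (z ^ n) i * eval (z ^ n) (pderiv i p) = 0 := by
  have hn₁ : n - 1 ≠ 0 := by lia
  have hn₀ : n ≠ 0 := by lia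
  simp [pderiv_expand, eval_expand, hnR, hn₁, hn₀]

end PowerSubstitution

section PrincipalMinors

variable {ι R : Type*} [Fintype ι]

theorem submatrix_val_mulVec_of_forall_notMem [NonUnitalNonAssocSemiring R] (N : Matrix ι ι R)
    {s : Finset ι} {w : ι → R} (hw : ∀ i ∉ s, w i = 0) (i : s) :
    (N.submatrix (Subtype.val : s → ι) Subtype.val *ᵥ fun j : s => w j) i = (N *ᵥ w) i := by
  simp only [mulVec, dotProduct, submatrix_apply]
  rw [Finset.sum_coe_sort s fun j => N i j * w j]
  exact Finset.sum_subset s.subset_univ fun j _ hj => by rw [hw j hj, mul_zero]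

theorem forall_mul_mulVec_eq_zero_iff_exists_single [CommRing R] [IsDomain R] [DecidableEq ι]
    [Nonempty ι] {N : Matrix ι ι R} (hdiag : ∀ i, N i i = 0)
    (hminor : ∀ s : Finset ι, 2 ≤ s.card →
      (N.submatrix (Subtype.val : s → ι) Subtype.val).det ≠ 0) {w : ι → R} :
    (∀ i, w i * (N *ᵥ w) i = 0) ↔ ∃ j c, w = Pi.single j c := by
  classical
  constructor
  · intro h
    let s : Finset ι := {i | w i ≠ 0}
    have hws : ∀ i ∉ s, w i = 0 := by simp [s]
    have hs : s.card ≤ 1 := by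
      by_contra! hcard
      have hker : N.submatrix (Subtype.val : s → ι) Subtype.val *ᵥ (fun j : s => w j) = 0 := by
        ext i
        rw [submatrix_val_mulVec_of_forall_notMem N hws]
        exact (mul_eq_zero.1 (h i)).resolve_left (Finset.mem_filter.1 i.2).2
      obtain ⟨i, hi⟩ := Finset.card_pos.1 (by lia : 0 < s.card)
      exact (Finset.mem_filter.1 hi).2
        (congrFun (eq_zero_of_mulVec_eq_zero (hminor s hcard) hker) ⟨i, hi⟩)
    obtain ⟨j, hj⟩ := Finset.card_le_one_iff_subset_singleton.1 hs
    refine ⟨j, w j, funext fun i => ?_⟩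
    rcases eq_or_ne i j with rfl | hij
    · rw [Pi.single_eq_same]
    · rw [Pi.single_eq_of_ne hij, hws i fun hi => hij (Finset.mem_singleton.1 (hj hi))]
  · rintro ⟨j, c, rfl⟩ i
    rcases eq_or_ne i j with rfl | hij
    · simp [hdiag]
    · simp [hij]

end PrincipalMinors

section Counting

theorem ncard_univ_pi {ι : Type*} [Fintype ι] {α : ι → Type*} (s : ∀ i, Set (α i)) :
    (Set.univ.pi s).ncard = ∏ i, (s i).ncard := by
  simp only [← Nat.card_coe_set_eq, Nat.card_congr (Equiv.Set.univPi s), Nat.card_pi]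

theorem ncard_preimage_range {ι α β : Type*} [Fintype ι] {f : α → β} {g : ι → β}
    (hg : Function.Injective g) {k : ℕ} (hk : k ≠ 0) (hf : ∀ i, (f ⁻¹' {g i}).ncard = k) :
    (f ⁻¹' Set.range g).ncard = Fintype.card ι * k := by
  have hfin : ∀ i, (f ⁻¹' {g i}).Finite := fun i =>
    Set.finite_of_ncard_ne_zero ((hf i).trans_ne hk)
  have hdisj : Pairwise (Function.onFun Disjoint fun i => f ⁻¹' {g i}) := fun i j hij =>
    (Set.disjoint_singleton.2 (hg.ne hij)).preimage f
  rw [← Set.iUnion_singleton_eq_range, Set.preimage_iUnion,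
    Set.ncard_iUnion_of_finite hfin hdisj, finsum_eq_sum_of_fintype]
  simp [hf]

theorem ncard_setOf_pow_eq {K : Type*} [Field K] [IsAlgClosed K] {n : ℕ} (hn : (n : K) ≠ 0) {a : K}
    (ha : a ≠ 0) : {x : K | x ^ n = a}.ncard = n := by
  have hpos : 0 < n := Nat.pos_of_ne_zero (by rintro rfl; exact hn Nat.cast_zero)
  have hroots : {x : K | x ^ n = a} = (Polynomial.X ^ n - Polynomial.C a).rootSet K := by
    ext x
    simp [Polynomial.mem_rootSet, Polynomial.X_pow_sub_C_ne_zero hpos, sub_eq_zero]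
  rw [hroots, ← Nat.card_coe_set_eq, Nat.card_eq_fintype_card,
    Polynomial.card_rootSet_eq_natDegree (Polynomial.separable_X_pow_sub_C a hn ha)
      (IsAlgClosed.splits_domain _), Polynomial.natDegree_X_pow_sub_C]

theorem ncard_setOf_apply_eq_one_pow_eq {ι K : Type*} [Fintype ι] [Field K] [IsAlgClosed K]
    [DecidableEq K] {n : ℕ} (hn : (n : K) ≠ 0) {u : ι → K} {j : ι} (hj : u j = 1) :
    {z : ι → K | z j = 1 ∧ z ^ n = u}.ncard = n ^ (Finset.card {i | u i ≠ 0} - 1) := by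
  classical
  have hn₀ : n ≠ 0 := by rintro rfl; exact hn Nat.cast_zero
  have hpi : {z : ι → K | z j = 1 ∧ z ^ n = u} =
      Set.univ.pi fun i => if i = j then {1} else {x | x ^ n = u i} := by
    ext z
    simp only [Set.mem_ofPred_eq, Set.mem_univ_pi, funext_iff, Pi.pow_apply]
    constructor
    · rintro ⟨hz, hzu⟩ i
      split_ifs with hij
      · rw [hij, hz, Set.mem_singleton_iff]
      · exact hzu i
    · intro h
      have hz : z j = 1 := by simpa using h j
      refine ⟨hz, fun i => ?_⟩
      rcases eq_or_ne i j with rfl | hij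
      · rw [hz, hj, one_pow]
      · simpa [hij] using h i
  have hfactor : ∀ i, (if i = j then {1} else {x : K | x ^ n = u i}).ncard =
      if i ∈ ({i | u i ≠ 0} : Finset ι).erase j then n else 1 := by
    intro i
    rcases eq_or_ne i j with rfl | hij
    · simp
    · rcases eq_or_ne (u i) 0 with hi | hi
      · simp [hij, hi, hn₀]
      · simp [hij, hi, ncard_setOf_pow_eq hn hi]
  simp_rw [hpi, ncard_univ_pi, hfactor, Finset.prod_ite_mem, Finset.univ_inter,
    Finset.prod_const]
  rw [Finset.card_erase_of_mem (by simp [hj])]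

end Counting

theorem setOf_exists_mk_eq_of_forall_iff {K V : Type*} [DivisionRing K] [AddCommGroup V]
    [Module K V] {P : V → Prop} {s : Set (Projectivization K V)}
    (h : ∀ z (hz : z ≠ 0), P z ↔ mk K z hz ∈ s) :
    {p | ∃ (z : V) (hz : z ≠ 0), mk K z hz = p ∧ P z} = s := by
  ext p
  constructor
  · rintro ⟨z, hz, rfl, hP⟩
    exact (h z hz).1 hP
  · induction p with | h z hz
    exact fun hp => ⟨z, hz, rfl, (h z hz).2 hp⟩

section PowerMap

variable {ι K : Type*} [Field K]

/-- The map `[z] ↦ [(zᵢⁿ)ᵢ]` of projective space to itself, defined for `n ≠ 0`. -/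
def powMap (n : ℕ) [NeZero n] : Projectivization K (ι → K) → Projectivization K (ι → K) :=
  Projectivization.lift (fun z => mk K (z.1 ^ n) (pow_ne_zero n z.2)) (by
    rintro ⟨a, ha⟩ ⟨b, hb⟩ t (rfl : a = t • b)
    exact (mk_eq_mk_iff' K _ _ _ _).2 ⟨t ^ n, (smul_pow t b n).symm⟩)

variable {n : ℕ} [NeZero n]

theorem powMap_mk_eq_mk_iff {z v : ι → K} (hz : z ≠ 0) (hv : v ≠ 0) :
    powMap n (mk K z hz) = mk K v hv ↔ ∃ c : K, c ≠ 0 ∧ z ^ n = c • v := by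
  rw [powMap, Projectivization.lift_mk, mk_eq_mk_iff]
  exact ⟨fun ⟨c, hc⟩ => ⟨c, c.ne_zero, hc.symm⟩, fun ⟨c, hc, h⟩ => ⟨Units.mk0 c hc, h.symm⟩⟩

theorem ncard_setOf_apply_eq_one_eq_ncard_powMap_preimage {v : ι → K} (hv : v ≠ 0) {j : ι}
    (hj : v j ≠ 0) :
    {z : ι → K | z j = 1 ∧ z ^ n = (v j)⁻¹ • v}.ncard = (powMap n ⁻¹' {mk K v hv}).ncard := by
  have hne : ∀ z : ι → K, z j = 1 → z ≠ 0 := by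
    rintro _ hz rfl
    exact zero_ne_one hz
  refine Set.ncard_congr (fun z hz => mk K z (hne z hz.1)) ?_ ?_ ?_
  · rintro z ⟨hz, hzv⟩
    exact (powMap_mk_eq_mk_iff _ hv).2 ⟨(v j)⁻¹, inv_ne_zero hj, hzv⟩
  · intro z z' hz hz' h
    obtain ⟨t, ht⟩ := (mk_eq_mk_iff' K _ _ _ _).1 h
    have ht₁ : t = 1 := by simpa [hz.1, hz'.1] using congrFun ht j
    rw [← ht, ht₁, one_smul]
  · intro p hp
    induction p with | h z hz
    obtain ⟨c, hc, hzv⟩ := (powMap_mk_eq_mk_iff hz hv).1 hp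
    have hzj : z j ^ n = c * v j := congrFun hzv j
    have hzj₀ : z j ≠ 0 := by
      intro h
      rw [h, zero_pow (NeZero.ne n)] at hzj
      exact mul_ne_zero hc hj hzj.symm
    refine ⟨(z j)⁻¹ • z, ⟨inv_mul_cancel₀ hzj₀, ?_⟩, (mk_eq_mk_iff' K _ _ _ _).2 ⟨_, rfl⟩⟩
    rw [smul_pow, inv_pow, hzj, hzv, smul_smul, _root_.mul_inv_rev, inv_mul_cancel_right₀ hc]

theorem ncard_powMap_preimage_mk [Fintype ι] [IsAlgClosed K] [DecidableEq K] (hn : (n : K) ≠ 0)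
    {v : ι → K} (hv : v ≠ 0) :
    (powMap n ⁻¹' {mk K v hv}).ncard = n ^ (Finset.card {i | v i ≠ 0} - 1) := by
  obtain ⟨j, hj : v j ≠ 0⟩ := Function.ne_iff.1 hv
  rw [← ncard_setOf_apply_eq_one_eq_ncard_powMap_preimage hv hj,
    ncard_setOf_apply_eq_one_pow_eq hn (u := (v j)⁻¹ • v) (inv_mul_cancel₀ hj)]
  simp [hj]

end PowerMap

section LabsOctic

/-- The quadric `y₀y₁ - ab`, where `a` and `b` are the linear forms in `y` that become `labsA4` and
`labsB4` on substituting `yᵢ = zᵢ⁴`. -/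
noncomputable def labsQuadric : MvPolynomial (Fin 4) ℂ :=
  X 0 * X 1 -
    (C (8 / 9) * X 0 + C (8 / 9) * X 1 - C (64 / 63) * X 2 + C (1 / 63) * X 3) *
      (C (1 / 9) * X 0 + C (1 / 9) * X 1 + C (1 / 63) * X 2 - C (1 / 63) * X 3)

theorem expand_labsQuadric : expand 4 labsQuadric = labsG8 := by
  simp [labsQuadric, labsG8, labsA4, labsB4, mul_pow]

/-- The inverse of the Hessian of `labsQuadric`, i.e. the matrix of the dual quadric. Its `j`-th
column is the point at which the plane `y_j = 0` is tangent to the quadric. -/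
def tangencyMatrix : Matrix (Fin 4) (Fin 4) ℂ :=
  !![0, 1, 1, 8; 1, 0, 1, 8; 1, 1, 0, -49; 8, 8, -49, 0]

theorem tangencyMatrix_apply_eq_zero_iff {i j : Fin 4} : tangencyMatrix i j = 0 ↔ i = j := by
  fin_cases i <;> fin_cases j <;> simp [tangencyMatrix]

theorem det_tangencyMatrix_submatrix_ne_zero (s : Finset (Fin 4)) (hs : 2 ≤ s.card) :
    (tangencyMatrix.submatrix (Subtype.val : s → Fin 4) Subtype.val).det ≠ 0 := by
  let N : Matrix (Fin 4) (Fin 4) ℤ := !![0, 1, 1, 8; 1, 0, 1, 8; 1, 1, 0, -49; 8, 8, -49, 0]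
  have hN : tangencyMatrix = N.map (Int.castRingHom ℂ) := by
    ext i j
    fin_cases i <;> fin_cases j <;> simp [tangencyMatrix, N]
  have hminor : ∀ s : Finset (Fin 4), 2 ≤ s.card →
      (N.submatrix (Subtype.val : s → Fin 4) Subtype.val).det ≠ 0 := by
    decide +kernel
  rw [hN, submatrix_map, ← RingHom.mapMatrix_apply, ← RingHom.map_det]
  exact Int.cast_ne_zero.2 (hminor s hs)

theorem tangencyMatrix_mulVec_eval_pderiv_labsQuadric (y : Fin 4 → ℂ) :
    (tangencyMatrix *ᵥ fun i => eval y (pderiv i labsQuadric)) = y := by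
  ext i
  fin_cases i <;>
    simp [tangencyMatrix, labsQuadric, dotProduct, Fin.sum_univ_four, pderiv_X,
      Derivation.leibniz] <;> ring

theorem eval_tangencyMatrix_mulVec_pderiv_labsQuadric (w : Fin 4 → ℂ) (i : Fin 4) :
    eval (tangencyMatrix *ᵥ w) (pderiv i labsQuadric) = w i := by
  fin_cases i <;>
    simp [tangencyMatrix, labsQuadric, dotProduct, Fin.sum_univ_four, pderiv_X,
      Derivation.leibniz] <;> ring

theorem forall_mul_eval_pderiv_labsQuadric_eq_zero_iff {y : Fin 4 → ℂ} :
    (∀ i, y i * eval y (pderiv i labsQuadric) = 0) ↔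
      ∃ j, ∃ c : ℂ, y = c • tangencyMatrix.col j := by
  set w : Fin 4 → ℂ := fun i => eval y (pderiv i labsQuadric) with hw
  have hy : tangencyMatrix *ᵥ w = y := tangencyMatrix_mulVec_eval_pderiv_labsQuadric y
  calc (∀ i, y i * w i = 0)
      ↔ ∀ i, w i * (tangencyMatrix *ᵥ w) i = 0 := by simp only [hy, mul_comm]
    _ ↔ ∃ j c, w = Pi.single j c :=
        forall_mul_mulVec_eq_zero_iff_exists_single
          (fun _ => tangencyMatrix_apply_eq_zero_iff.2 rfl) det_tangencyMatrix_submatrix_ne_zero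
    _ ↔ ∃ j, ∃ c : ℂ, y = c • tangencyMatrix.col j := by
        refine exists_congr fun j => exists_congr fun c => ⟨fun h => ?_, fun h => ?_⟩
        · rw [← hy, h, mulVec_single, op_smul_eq_smul]
        · rw [← op_smul_eq_smul, ← mulVec_single] at h
          ext i
          rw [hw, h]
          exact eval_tangencyMatrix_mulVec_pderiv_labsQuadric _ i

theorem tangencyMatrix_col_ne_zero (j : Fin 4) : tangencyMatrix.col j ≠ 0 := fun h =>
  (by lia : j + 1 ≠ j) (tangencyMatrix_apply_eq_zero_iff.1 (congrFun h (j + 1)))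

/-- The points of tangency of the coordinate planes with the quadric, in `ℙ³(ℂ)`. -/
noncomputable def tangencyPoint (j : Fin 4) : Projectivization ℂ (Fin 4 → ℂ) :=
  mk ℂ (tangencyMatrix.col j) (tangencyMatrix_col_ne_zero j)

theorem tangencyPoint_injective : Function.Injective tangencyPoint := by
  intro i j h
  obtain ⟨c, hc⟩ := (mk_eq_mk_iff ℂ _ _ _ _).1 h
  have hci : c • tangencyMatrix i j = tangencyMatrix i i := congrFun hc i
  rw [tangencyMatrix_apply_eq_zero_iff.2 rfl] at hci
  exact tangencyMatrix_apply_eq_zero_iff.1 ((smul_eq_zero_iff_eq c).1 hci)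

theorem powMap_mk_mem_range_tangencyPoint_iff {n : ℕ} [NeZero n] {z : Fin 4 → ℂ} (hz : z ≠ 0) :
    powMap n (mk ℂ z hz) ∈ Set.range tangencyPoint ↔
      ∃ j, ∃ c : ℂ, c ≠ 0 ∧ z ^ n = c • tangencyMatrix.col j :=
  exists_congr fun j => eq_comm.trans (powMap_mk_eq_mk_iff hz (tangencyMatrix_col_ne_zero j))

theorem ncard_powMap_preimage_tangencyPoint (n : ℕ) [NeZero n] (j : Fin 4) :
    (powMap n ⁻¹' {tangencyPoint j}).ncard = n ^ 2 := by
  have hsupport : ({i | tangencyMatrix.col j i ≠ 0} : Finset (Fin 4)) = {j}ᶜ := by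
    ext i
    simp [tangencyMatrix_apply_eq_zero_iff]
  rw [tangencyPoint, ncard_powMap_preimage_mk (Nat.cast_ne_zero.2 (NeZero.ne n)), hsupport,
    Finset.card_compl, Fintype.card_fin, Finset.card_singleton]

theorem forall_eval_pderiv_labsG8_eq_zero_iff {z : Fin 4 → ℂ} (hz : z ≠ 0) :
    (∀ i, eval z (pderiv i labsG8) = 0) ↔
      powMap 4 (mk ℂ z hz) ∈ Set.range tangencyPoint := by
  simp only [← expand_labsQuadric, eval_pderiv_expand_eq_zero_iff (by norm_num : 2 ≤ 4)
    (by norm_num : ((4 : ℕ) : ℂ) ≠ 0), forall_mul_eval_pderiv_labsQuadric_eq_zero_iff,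
    powMap_mk_mem_range_tangencyPoint_iff]
  refine exists_congr fun j => exists_congr fun c => (and_iff_right_of_imp ?_).symm
  rintro h rfl
  exact pow_ne_zero 4 hz (h.trans (zero_smul ℂ _))

theorem exists_pow_four_eq_smul_iff {z : Fin 4 → ℂ} (hz : z ≠ 0) :
    (∃ c : ℂ, c ≠ 0 ∧
      ((fun i => z i ^ 4) = c • ![(0 : ℂ), 1, 1, 8] ∨
       (fun i => z i ^ 4) = c • ![(1 : ℂ), 0, 1, 8] ∨
       (fun i => z i ^ 4) = c • ![(1 : ℂ), 1, 0, -49] ∨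
       (fun i => z i ^ 4) = c • ![(8 : ℂ), 8, -49, 0])) ↔
      powMap 4 (mk ℂ z hz) ∈ Set.range tangencyPoint := by
  have hcol : tangencyMatrix.col =
      ![![0, 1, 1, 8], ![1, 0, 1, 8], ![1, 1, 0, -49], ![8, 8, -49, 0]] := by
    ext j i
    fin_cases i <;> fin_cases j <;> rfl
  rw [powMap_mk_mem_range_tangencyPoint_iff, exists_comm]
  simp only [exists_and_left, hcol, Fin.exists_fin_succ, IsEmpty.exists_iff, or_false]
  rfl

theorem ncard_powMap_four_preimage_range_tangencyPoint :
    (powMap 4 ⁻¹' Set.range tangencyPoint).ncard = 64 :=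
  ncard_preimage_range tangencyPoint_injective (by norm_num)
    (ncard_powMap_preimage_tangencyPoint 4)

end LabsOctic

/-- The singular locus of the Labs octic `G₈ = 0` in `ℙ³(ℂ)` is exactly the set of
points represented by `z` with `(z₀⁴, z₁⁴, z₂⁴, z₃⁴)` a nonzero scalar multiple of one
of `(0,1,1,8)`, `(1,0,1,8)`, `(1,1,0,−49)`, `(8,8,−49,0)`; it has exactly `64` points. -/
theorem sing_labs_octic :
    ({p : Projectivization ℂ (Fin 4 → ℂ) |
        ∃ (z : Fin 4 → ℂ) (hz : z ≠ 0), Projectivization.mk ℂ z hz = p ∧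
          ∀ i : Fin 4, eval z (pderiv i labsG8) = 0}
      = {p : Projectivization ℂ (Fin 4 → ℂ) |
          ∃ (z : Fin 4 → ℂ) (hz : z ≠ 0), Projectivization.mk ℂ z hz = p ∧
            ∃ c : ℂ, c ≠ 0 ∧
              ((fun i => z i ^ 4) = c • ![(0 : ℂ), 1, 1, 8] ∨
               (fun i => z i ^ 4) = c • ![(1 : ℂ), 0, 1, 8] ∨
               (fun i => z i ^ 4) = c • ![(1 : ℂ), 1, 0, -49] ∨
               (fun i => z i ^ 4) = c • ![(8 : ℂ), 8, -49, 0])}) ∧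
    {p : Projectivization ℂ (Fin 4 → ℂ) |
        ∃ (z : Fin 4 → ℂ) (hz : z ≠ 0), Projectivization.mk ℂ z hz = p ∧
          ∀ i : Fin 4, eval z (pderiv i labsG8) = 0}.ncard = 64 := by
  have hsing := setOf_exists_mk_eq_of_forall_iff
    (s := powMap 4 ⁻¹' Set.range tangencyPoint) fun _ hz => forall_eval_pderiv_labsG8_eq_zero_iff hz
  have hpoints := setOf_exists_mk_eq_of_forall_iff
    (s := powMap 4 ⁻¹' Set.range tangencyPoint) fun _ hz => exists_pow_four_eq_smul_iff hz
  exact ⟨hsing.trans hpoints.symm, hsing ▸ ncard_powMap_four_preimage_range_tangencyPoint⟩
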